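/- Let k be a field of characteristic 0 and v ∈ ℕⁿ. The graph monomials m_Γ, where Γ ranges over the noncrossing, upward-oriented directed graphs on {1,…,n} with valence vector v, form a basis of the k-vector space R_v of SL₂(k)-invariants of multidegree v. -/

import Mathlib

/-!
The proof is an induction on the number of points, by merging the last two points `p`, `l`.

Restriction to the locus where `p` and `l` coincide is an equivariant algebra map `ren (merge n)`
sending `R_w` to invariants of fewer points. A multihomogeneous polynomial vanishing on this locus
is divisible by `[p l]` (`bracket_dvd`): modulo `[p l]`, a monomial of fixed multidegree depends
only on its restriction. Hence the kernel of restriction on `R_w` is `[p l]` times the invariants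
of multidegree `w - e_p - e_l` (`exists_quotient`).

Noncrossing graphs behave in the same way. Those containing the edge `(p, l)` are obtained by adding
that edge to an arbitrary noncrossing graph of valence `w - e_p - e_l` (`cons_mem_graphs`), since
an edge between the last two points crosses nothing. Those not containing it correspond
bijectively, by merging, to the noncrossing graphs on the merged points: the edges arriving at the
merged point must be distributed so that those with the smaller initial points go to `l`, and this
can be done in exactly one way (`exists_lift`, `merge_injOn`). So both linear independence and
spanning pass through the exact sequence, by a secondary induction on the valence of `l`
(`linearIndep_step`, `span_step`).

The remaining case is that of at most one point, where the only graph is empty and the only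
invariants are constants (`one_point`).
-/

open MvPolynomial

/-- The polynomial ring `A = k[x_1, y_1, …, x_n, y_n]`: variable `(i, 0)` is `x_i`
and `(i, 1)` is `y_i`. -/
abbrev PtRing (k : Type) [CommRing k] (n : ℕ) := MvPolynomial (Fin n × Fin 2) k

/-- The bracket `[ab] = x_a y_b − x_b y_a`. -/
noncomputable def bracket (k : Type) [CommRing k] (n : ℕ) (a b : Fin n) : PtRing k n :=
  X (a, 0) * X (b, 1) - X (b, 0) * X (a, 1)

/-- The graph monomial `m_Γ = ∏_{(a,b) ∈ Γ} [ab]` of a directed graph `Γ`,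
viewed as a multiset of directed edges. -/
noncomputable def graphMonomial (k : Type) [CommRing k] (n : ℕ)
    (Γ : Multiset (Fin n × Fin n)) : PtRing k n :=
  (Γ.map fun e => bracket k n e.1 e.2).prod

/-- The `k`-algebra endomorphism of `A` induced by a `2×2` matrix `g = ((p,q),(r,s))`:
`x_i ↦ p·x_i + r·y_i` and `y_i ↦ q·x_i + s·y_i`. -/
noncomputable def subst (k : Type) [CommRing k] (n : ℕ) (g : Matrix (Fin 2) (Fin 2) k) :
    PtRing k n →ₐ[k] PtRing k n :=
  aeval fun p =>
    if p.2 = 0 then C (g 0 0) * X (p.1, 0) + C (g 1 0) * X (p.1, 1)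
    else C (g 0 1) * X (p.1, 0) + C (g 1 1) * X (p.1, 1)

/-- The valence vector of a directed graph: the `i`-th entry is the number of edges
(with multiplicity) having `i` as an endpoint. -/
def valence (n : ℕ) (Γ : Multiset (Fin n × Fin n)) : Fin n → ℕ :=
  fun i => (Γ.map Prod.fst).count i + (Γ.map Prod.snd).count i

/-- `R_v`: the space of `SL₂(k)`-invariant multihomogeneous polynomials of multidegree `v`. -/
noncomputable def Rv (k : Type) [CommRing k] (n : ℕ) (v : Fin n → ℕ) :
    Submodule k (PtRing k n) :=
  (⨅ g : Matrix.SpecialLinearGroup (Fin 2) k,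
      LinearMap.ker ((subst k n (g : Matrix (Fin 2) (Fin 2) k)).toLinearMap
        - (LinearMap.id : PtRing k n →ₗ[k] PtRing k n))) ⊓
  weightedHomogeneousSubmodule k (fun p : Fin n × Fin 2 => Finsupp.single p.1 1)
    (Finsupp.equivFunOnFinite.symm v)

/-- A directed graph is noncrossing if no two of its edges have endpoint sets `{a,b}` and
`{c,d}` with `a < c < b < d`. -/
def Noncrossing (n : ℕ) (Γ : Multiset (Fin n × Fin n)) : Prop :=
  ∀ e ∈ Γ, ∀ e' ∈ Γ, ¬ ∃ a b c d : Fin n,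
    ({e.1, e.2} : Set (Fin n)) = {a, b} ∧ ({e'.1, e'.2} : Set (Fin n)) = {c, d} ∧
    a < c ∧ c < b ∧ b < d

/-- A directed graph is upward-oriented if every edge `(a,b)` satisfies `a < b`. -/
def Upward (n : ℕ) (Γ : Multiset (Fin n × Fin n)) : Prop :=
  ∀ e ∈ Γ, e.1 < e.2

/-! ### Graphs and the merging of the last two points -/

section Graphs

open Finsupp

/-- The valence vector of a graph as a finitely supported function, hence additive in `Γ` by
construction. -/
noncomputable def val {n : ℕ} (Γ : Multiset (Fin n × Fin n)) : Fin n →₀ ℕ :=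
  (Γ.map fun e => single e.1 1 + single e.2 1).sum

/-- The noncrossing upward-oriented graphs with valence vector `w`. For upward-oriented graphs,
noncrossing can be tested on the ordered endpoints of the edges. -/
def graphs (n : ℕ) (w : Fin n →₀ ℕ) : Set (Multiset (Fin n × Fin n)) :=
  {Γ | (∀ e ∈ Γ, e.1 < e.2) ∧
    (∀ e ∈ Γ, ∀ e' ∈ Γ, ¬ (e.1 < e'.1 ∧ e'.1 < e.2 ∧ e.2 < e'.2)) ∧ val Γ = w}

/-- The monotone surjection `Fin (n+2) → Fin (n+1)` identifying the last two points. -/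
def merge (n : ℕ) (i : Fin (n + 2)) : Fin (n + 1) := ⟨min i.1 n, by omega⟩

/-- The last but one point. -/
def pen (n : ℕ) : Fin (n + 2) := (Fin.last n).castSucc

lemma pen_lt_last (n : ℕ) : pen n < Fin.last (n + 1) := Fin.castSucc_lt_last _

lemma merge_pen (n : ℕ) : merge n (pen n) = merge n (Fin.last (n + 1)) := by
  ext; simp [merge, pen]

lemma merge_castSucc (n : ℕ) (i : Fin (n + 1)) : merge n i.castSucc = i := by
  ext; simp [merge]; omega

lemma castSucc_merge (n : ℕ) {i : Fin (n + 2)} (h : i ≠ Fin.last (n + 1)) :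
    (merge n i).castSucc = i := by
  have : i.1 ≠ n + 1 := fun h' => h (Fin.ext h')
  ext; simp [merge]; omega

lemma lt_of_merge_lt {n : ℕ} {i j : Fin (n + 2)} (h : merge n i < merge n j) : i < j := by
  simp only [merge, Fin.lt_def] at *; omega

lemma merge_lt {n : ℕ} {i j : Fin (n + 2)} (h : i < j) (hi : i ≠ pen n) :
    merge n i < merge n j := by
  have : i.1 ≠ n := fun h' => hi (Fin.ext (by simpa [pen] using h'))
  simp only [merge, Fin.lt_def] at *; omega

lemma eq_last_of_pen_lt {n : ℕ} {i : Fin (n + 2)} (h : pen n < i) : i = Fin.last (n + 1) := by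
  ext; simp [pen, Fin.lt_def] at *; omega

lemma le_pen_of_lt_last {n : ℕ} {i : Fin (n + 2)} (h : i < Fin.last (n + 1)) : i ≤ pen n := by
  simp [pen, Fin.lt_def, Fin.le_def] at *; omega

@[simp] lemma val_zero {n : ℕ} : val (0 : Multiset (Fin n × Fin n)) = 0 := rfl

@[simp] lemma val_cons {n : ℕ} (e : Fin n × Fin n) (Γ : Multiset (Fin n × Fin n)) :
    val (e ::ₘ Γ) = single e.1 1 + single e.2 1 + val Γ := by
  simp [val]

lemma val_map {m n : ℕ} (f : Fin m → Fin n) (Γ : Multiset (Fin m × Fin m)) :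
    val (Γ.map (Prod.map f f)) = mapDomain f (val Γ) := by
  induction Γ using Multiset.induction_on with
  | empty => simp
  | cons e Γ ih => simp [mapDomain_add, mapDomain_single, ih]

lemma val_eq_valence {n : ℕ} (Γ : Multiset (Fin n × Fin n)) (i : Fin n) :
    val Γ i = valence n Γ i := by
  induction Γ using Multiset.induction_on with
  | empty => simp [valence]
  | cons e Γ ih =>
    simp only [val_cons, valence, Finsupp.add_apply, ih, Multiset.map_cons, Multiset.count_cons,
      single_apply, eq_comm (a := i)]
    ring

lemma exists_edge {n : ℕ} {Γ : Multiset (Fin n × Fin n)} {i : Fin n} (h : val Γ i ≠ 0) :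
    ∃ e ∈ Γ, e.1 = i ∨ e.2 = i := by
  induction Γ using Multiset.induction_on with
  | empty => simp at h
  | cons e Γ ih =>
    by_cases he : e.1 = i ∨ e.2 = i
    · exact ⟨e, by simp, he⟩
    · rw [not_or] at he
      obtain ⟨e', h1, h2⟩ := ih (by
        simpa [single_apply, he.1, he.2] using h)
      exact ⟨e', by simp [h1], h2⟩

lemma val_ne_zero {n : ℕ} {Γ : Multiset (Fin n × Fin n)} {e : Fin n × Fin n} (h : e ∈ Γ) :
    val Γ e.1 ≠ 0 ∧ val Γ e.2 ≠ 0 := by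
  obtain ⟨Γ₀, rfl⟩ := Multiset.exists_cons_of_mem h
  simp

/-- Identifying the last two points sends a graph without edges between them to a noncrossing
upward-oriented graph. -/
lemma merge_mem_graphs {n : ℕ} {w : Fin (n + 2) →₀ ℕ} {Γ : Multiset (Fin (n + 2) × Fin (n + 2))}
    (h : Γ ∈ graphs (n + 2) w) (he : (pen n, Fin.last (n + 1)) ∉ Γ) :
    Γ.map (Prod.map (merge n) (merge n)) ∈ graphs (n + 1) (mapDomain (merge n) w) := by
  obtain ⟨hu, hc, hv⟩ := h
  refine ⟨?_, ?_, by rw [val_map, hv]⟩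
  · intro e' he'
    obtain ⟨e, h1, rfl⟩ := Multiset.mem_map.1 he'
    refine merge_lt (hu e h1) fun h => he ?_
    have h2 := eq_last_of_pen_lt (h ▸ hu e h1)
    rw [← h, ← h2]; exact h1
  · intro e' he' f' hf'
    obtain ⟨e, h1, rfl⟩ := Multiset.mem_map.1 he'
    obtain ⟨f, h2, rfl⟩ := Multiset.mem_map.1 hf'
    rintro ⟨a, b, c⟩
    exact hc e h1 f h2 ⟨lt_of_merge_lt a, lt_of_merge_lt b, lt_of_merge_lt c⟩

lemma cons_mem_graphs {n : ℕ} {w : Fin (n + 2) →₀ ℕ} {Γ : Multiset (Fin (n + 2) × Fin (n + 2))} :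
    (pen n, Fin.last (n + 1)) ::ₘ Γ ∈
      graphs (n + 2) (single (pen n) 1 + single (Fin.last (n + 1)) 1 + w) ↔
    Γ ∈ graphs (n + 2) w := by
  constructor
  · rintro ⟨hu, hc, hv⟩
    refine ⟨fun e he => hu e (Multiset.mem_cons_of_mem he), fun e he f hf =>
      hc e (Multiset.mem_cons_of_mem he) f (Multiset.mem_cons_of_mem hf), ?_⟩
    rw [val_cons] at hv
    exact add_left_cancel hv
  · rintro ⟨hu, hc, hv⟩
    refine ⟨?_, ?_, by rw [val_cons, hv]⟩
    · intro e he
      rcases Multiset.mem_cons.1 he with rfl | he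
      · exact pen_lt_last n
      · exact hu e he
    · intro e he f hf
      rcases Multiset.mem_cons.1 he with rfl | he <;> rcases Multiset.mem_cons.1 hf with rfl | hf
      · simp
      · rintro ⟨-, -, h⟩
        exact absurd h (Fin.le_last _).not_gt
      · rintro ⟨-, h, h'⟩
        exact absurd (eq_last_of_pen_lt h) h'.ne
      · exact hc e he f hf

lemma single_shift {n : ℕ} {w : Fin (n + 2) →₀ ℕ} {t : ℕ} (h : w (Fin.last (n + 1)) = t + 1) :
    ∃ w₁ : Fin (n + 2) →₀ ℕ, w = w₁ + single (Fin.last (n + 1)) 1 ∧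
      (w₁ + single (pen n) 1 : Fin (n + 2) →₀ ℕ) (Fin.last (n + 1)) = t := by
  refine ⟨w - single (Fin.last (n + 1)) 1, ?_, ?_⟩
  · rw [tsub_add_cancel_of_le]
    rw [Finsupp.single_le_iff]; omega
  · simp [h, (pen_lt_last n).ne]

lemma castSucc_merge_map {n : ℕ} {Γ : Multiset (Fin (n + 2) × Fin (n + 2))}
    (h : val Γ (Fin.last (n + 1)) = 0) :
    (Γ.map (Prod.map (merge n) (merge n))).map (Prod.map Fin.castSucc Fin.castSucc) = Γ := by
  rw [Multiset.map_map]
  refine (Multiset.map_congr rfl fun e he => ?_).trans Γ.map_id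
  have h1 := val_ne_zero he
  exact Prod.ext (castSucc_merge n fun h' => h1.1 (h' ▸ h))
    (castSucc_merge n fun h' => h1.2 (h' ▸ h))

/-- Every noncrossing graph on the merged points lifts to one with prescribed valences at the
last two points. The lift is built by moving, one at a time, the edge `(a, pen)` with the least
`a` to `(a, last)`. -/
lemma exists_lift (n t : ℕ) (w : Fin (n + 2) →₀ ℕ) (hw : w (Fin.last (n + 1)) = t)
    (Γ' : Multiset (Fin (n + 1) × Fin (n + 1)))
    (hΓ : Γ' ∈ graphs (n + 1) (mapDomain (merge n) w)) :
    ∃ Γ ∈ graphs (n + 2) w, Γ.map (Prod.map (merge n) (merge n)) = Γ' := by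
  induction t generalizing w with
  | zero =>
    obtain ⟨hu, hc, hv⟩ := hΓ
    refine ⟨Γ'.map (Prod.map Fin.castSucc Fin.castSucc), ⟨?_, ?_, ?_⟩, ?_⟩
    · intro e' he'
      obtain ⟨e, h1, rfl⟩ := Multiset.mem_map.1 he'
      simpa using hu e h1
    · intro e' he' f' hf'
      obtain ⟨e, h1, rfl⟩ := Multiset.mem_map.1 he'
      obtain ⟨f, h2, rfl⟩ := Multiset.mem_map.1 hf'
      simpa using hc e h1 f h2
    · rw [val_map, hv, ← mapDomain_comp]
      refine (mapDomain_congr (g := id) fun i hi => ?_).trans mapDomain_id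
      exact castSucc_merge n fun h => by simp [h, hw] at hi
    · rw [Multiset.map_map]
      refine (Multiset.map_congr rfl fun e he => ?_).trans Γ'.map_id
      exact Prod.ext (merge_castSucc n _) (merge_castSucc n _)
  | succ t ih =>
    obtain ⟨w₁, rfl, hw₁⟩ := single_shift hw
    obtain ⟨Γ₁, ⟨hu, hc, hv⟩, hm⟩ := ih (w₁ + single (pen n) 1) hw₁ (by
      simpa [mapDomain_add, mapDomain_single, merge_pen] using hΓ)
    have hne : ∃ a, (a, pen n) ∈ Γ₁ := by
      obtain ⟨e, he, h⟩ := exists_edge (Γ := Γ₁) (i := pen n) (by rw [hv]; simp)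
      rcases h with h | h
      · -- such an edge would become a loop after merging
        exfalso
        have h2 := eq_last_of_pen_lt (h ▸ hu e he)
        have := hΓ.1 _ (hm ▸ Multiset.mem_map_of_mem _ he)
        simp [h, h2, merge_pen] at this
      · exact ⟨e.1, by rw [← h]; exact he⟩
    obtain ⟨a, ha, hmin⟩ := (wellFounded_lt (α := Fin (n + 2))).has_min
      {a | (a, pen n) ∈ Γ₁} hne
    obtain ⟨Γ₀, rfl⟩ := Multiset.exists_cons_of_mem ha
    have hap : a < pen n := hu _ ha
    refine ⟨(a, Fin.last (n + 1)) ::ₘ Γ₀, ⟨?_, ?_, ?_⟩, ?_⟩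
    · intro e he
      rcases Multiset.mem_cons.1 he with rfl | he
      · exact hap.trans (pen_lt_last n)
      · exact hu e (Multiset.mem_cons_of_mem he)
    · intro e he f hf
      rcases Multiset.mem_cons.1 he with rfl | he <;> rcases Multiset.mem_cons.1 hf with rfl | hf
      · simp
      · rintro ⟨-, -, h⟩
        exact absurd h (Fin.le_last _).not_gt
      · rintro ⟨h1, h2, h3⟩
        rcases (le_pen_of_lt_last h3).lt_or_eq with h4 | h4
        · exact hc e (Multiset.mem_cons_of_mem he) _ ha ⟨h1, h2, h4⟩
        · refine hmin e.1 ?_ h1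
          rw [Set.mem_ofPred_eq, ← h4]
          exact Multiset.mem_cons_of_mem he
      · exact hc e (Multiset.mem_cons_of_mem he) f (Multiset.mem_cons_of_mem hf)
    · rw [val_cons] at hv ⊢
      have h2 : single a 1 + val Γ₀ = w₁ := by
        refine add_right_cancel (b := single (pen n) 1) ?_
        rw [← hv]; abel
      rw [← h2]; abel
    · rw [← hm]
      simp [merge_pen]

/-- In a noncrossing graph with positive valence at the last point and no edge from `pen`, the
edge `(a, last)` with the greatest `a` can be moved to `(a, pen)`, and then `a` is least among
the neighbours of `pen`. -/
lemma exists_unmove {n : ℕ} {w₁ : Fin (n + 2) →₀ ℕ}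
    {Γ : Multiset (Fin (n + 2) × Fin (n + 2))}
    (h : Γ ∈ graphs (n + 2) (w₁ + single (Fin.last (n + 1)) 1))
    (he : (pen n, Fin.last (n + 1)) ∉ Γ) :
    ∃ a Γ₀, Γ = (a, Fin.last (n + 1)) ::ₘ Γ₀ ∧
      (a, pen n) ::ₘ Γ₀ ∈ graphs (n + 2) (w₁ + single (pen n) 1) ∧
      (pen n, Fin.last (n + 1)) ∉ (a, pen n) ::ₘ Γ₀ ∧
      ∀ c, (c, pen n) ∈ (a, pen n) ::ₘ Γ₀ → a ≤ c := by
  obtain ⟨hu, hc, hv⟩ := h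
  have hne : ∃ a, (a, Fin.last (n + 1)) ∈ Γ := by
    obtain ⟨e, he, h⟩ := exists_edge (Γ := Γ) (i := Fin.last (n + 1)) (by rw [hv]; simp)
    rcases h with h | h
    · exact absurd (h ▸ hu e he) (Fin.le_last _).not_gt
    · exact ⟨e.1, by rw [← h]; exact he⟩
  obtain ⟨a, ha, hmax⟩ := (wellFounded_gt (α := Fin (n + 2))).has_min
    {a | (a, Fin.last (n + 1)) ∈ Γ} hne
  obtain ⟨Γ₀, rfl⟩ := Multiset.exists_cons_of_mem ha
  have hap : a < pen n := by
    refine (le_pen_of_lt_last (hu _ ha)).lt_of_ne fun h => he ?_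
    rw [← h]; exact ha
  refine ⟨a, Γ₀, rfl, ⟨?_, ?_, ?_⟩, ?_, ?_⟩
  · intro e he
    rcases Multiset.mem_cons.1 he with rfl | he
    · exact hap
    · exact hu e (Multiset.mem_cons_of_mem he)
  · intro e he f hf
    rcases Multiset.mem_cons.1 he with rfl | he <;> rcases Multiset.mem_cons.1 hf with rfl | hf
    · simp
    · rintro ⟨h1, -, h⟩
      refine hmax f.1 ?_ h1
      rw [Set.mem_ofPred_eq, ← eq_last_of_pen_lt h]
      exact Multiset.mem_cons_of_mem hf
    · rintro ⟨h1, h2, h3⟩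
      exact hc e (Multiset.mem_cons_of_mem he) _ ha ⟨h1, h2, h3.trans (pen_lt_last n)⟩
    · exact hc e (Multiset.mem_cons_of_mem he) f (Multiset.mem_cons_of_mem hf)
  · rw [val_cons] at hv ⊢
    have h2 : single a 1 + val Γ₀ = w₁ := by
      refine add_right_cancel (b := single (Fin.last (n + 1)) 1) ?_
      rw [← hv]; abel
    rw [← h2]; abel
  · intro h
    rcases Multiset.mem_cons.1 h with h | h
    · exact (pen_lt_last n).ne' (Prod.ext_iff.1 h).2
    · exact he (Multiset.mem_cons_of_mem h)
  · intro c h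
    rcases Multiset.mem_cons.1 h with h | h
    · exact (Prod.ext_iff.1 h).1.ge
    · by_contra! hlt
      exact hc _ (Multiset.mem_cons_of_mem h) _ ha ⟨hlt, hap, pen_lt_last n⟩

/-- A noncrossing graph of given valence without edges between the last two points is determined
by the merged graph. -/
lemma merge_injOn (n t : ℕ) (w : Fin (n + 2) →₀ ℕ) (hw : w (Fin.last (n + 1)) = t)
    {Γ Δ : Multiset (Fin (n + 2) × Fin (n + 2))}
    (hΓ : Γ ∈ graphs (n + 2) w) (hΓe : (pen n, Fin.last (n + 1)) ∉ Γ)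
    (hΔ : Δ ∈ graphs (n + 2) w) (hΔe : (pen n, Fin.last (n + 1)) ∉ Δ)
    (h : Γ.map (Prod.map (merge n) (merge n)) = Δ.map (Prod.map (merge n) (merge n))) :
    Γ = Δ := by
  induction t generalizing w Γ Δ with
  | zero =>
    rw [← castSucc_merge_map (Γ := Γ) (by rw [hΓ.2.2, hw]), h,
      castSucc_merge_map (by rw [hΔ.2.2, hw])]
  | succ t ih =>
    obtain ⟨w₁, rfl, hw₁⟩ := single_shift hw
    obtain ⟨a, Γ₀, rfl, h1, h2, h3⟩ := exists_unmove hΓ hΓe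
    obtain ⟨b, Δ₀, rfl, g1, g2, g3⟩ := exists_unmove hΔ hΔe
    have key := ih _ hw₁ h1 h2 g1 g2 (by simpa [merge_pen] using h)
    have hab : a = b := le_antisymm (h3 b (key ▸ Multiset.mem_cons_self _ _))
      (g3 a (key ▸ Multiset.mem_cons_self _ _))
    subst hab
    rw [(Multiset.cons_inj_right _).1 key]

end Graphs

/-! ### Invariance and multihomogeneity of graph monomials -/

section Algebra

open Finsupp

/-- The multigrading weight of the polynomial ring: both coordinates of the `i`-th point have
degree `e_i`. -/
noncomputable abbrev wt (n : ℕ) : Fin n × Fin 2 → Fin n →₀ ℕ := fun p => single p.1 1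

lemma mem_Rv {k : Type} [CommRing k] {n : ℕ} {w : Fin n →₀ ℕ} {f : PtRing k n} :
    f ∈ Rv k n w ↔ (∀ g : Matrix.SpecialLinearGroup (Fin 2) k,
      subst k n (g : Matrix (Fin 2) (Fin 2) k) f = f) ∧ IsWeightedHomogeneous (wt n) f w := by
  have : equivFunOnFinite.symm (w : Fin n → ℕ) = w := by ext; simp
  simp [Rv, Submodule.mem_iInf, sub_eq_zero, this, mem_weightedHomogeneousSubmodule]

lemma subst_bracket {k : Type} [CommRing k] {n : ℕ} (g : Matrix.SpecialLinearGroup (Fin 2) k)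
    (a b : Fin n) :
    subst k n (g : Matrix (Fin 2) (Fin 2) k) (bracket k n a b) = bracket k n a b := by
  have h : (C (g.1 0 0) * C (g.1 1 1) - C (g.1 0 1) * C (g.1 1 0) : PtRing k n) = 1 := by
    rw [← C_mul, ← C_mul, ← C_sub, ← Matrix.det_fin_two, g.2, C_1]
  simp only [subst, bracket, map_sub, map_mul, aeval_X]
  simp only [if_true, one_ne_zero, if_false]
  linear_combination (X (a, 0) * X (b, 1) - X (b, 0) * X (a, 1)) * h

lemma subst_graphMonomial {k : Type} [CommRing k] {n : ℕ}
    (g : Matrix.SpecialLinearGroup (Fin 2) k) (Γ : Multiset (Fin n × Fin n)) :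
    subst k n (g : Matrix (Fin 2) (Fin 2) k) (graphMonomial k n Γ) = graphMonomial k n Γ := by
  simp [graphMonomial, map_multiset_prod, Multiset.map_map, subst_bracket]

lemma bracket_hom {k : Type} [CommRing k] {n : ℕ} (a b : Fin n) :
    IsWeightedHomogeneous (wt n) (bracket k n a b) (single a 1 + single b 1) := by
  have h (p q : Fin n × Fin 2) := (isWeightedHomogeneous_X k (wt n) p).mul
    (isWeightedHomogeneous_X k (wt n) q)
  refine (h (a, 0) (b, 1)).sub ?_
  rw [add_comm]
  exact h (b, 0) (a, 1)

lemma graphMonomial_cons {k : Type} [CommRing k] {n : ℕ} (e : Fin n × Fin n)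
    (Γ : Multiset (Fin n × Fin n)) :
    graphMonomial k n (e ::ₘ Γ) = bracket k n e.1 e.2 * graphMonomial k n Γ := by
  simp [graphMonomial]

lemma graphMonomial_hom {k : Type} [CommRing k] {n : ℕ} (Γ : Multiset (Fin n × Fin n)) :
    IsWeightedHomogeneous (wt n) (graphMonomial k n Γ) (val Γ) := by
  induction Γ using Multiset.induction_on with
  | empty => simpa [graphMonomial] using isWeightedHomogeneous_one k (wt n)
  | cons e Γ ih =>
    rw [graphMonomial_cons, val_cons]
    exact (bracket_hom _ _).mul ih

lemma graphMonomial_mem_Rv {k : Type} [CommRing k] {n : ℕ} {w : Fin n →₀ ℕ}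
    {Γ : Multiset (Fin n × Fin n)} (h : Γ ∈ graphs n w) : graphMonomial k n Γ ∈ Rv k n w :=
  mem_Rv.2 ⟨fun g => subst_graphMonomial g Γ, h.2.2 ▸ graphMonomial_hom Γ⟩

lemma bracket_ne_zero {k : Type} [Field k] {n : ℕ} {a b : Fin n} (h : a ≠ b) :
    bracket k n a b ≠ 0 := by
  intro h0
  have := congrArg (MvPolynomial.eval fun p : Fin n × Fin 2 =>
    if p = (a, 0) ∨ p = (b, 1) then (1 : k) else 0) h0
  simp [bracket, h.symm] at this

/-! ### Restriction to the diagonal of the last two points -/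

/-- The algebra map induced by a map of points. For `f = merge n` it is restriction to the locus
where the last two points coincide. -/
noncomputable def ren (k : Type) [CommRing k] {m n : ℕ} (f : Fin m → Fin n) :
    PtRing k m →ₐ[k] PtRing k n :=
  rename (Prod.map f id)

lemma ren_graphMonomial {k : Type} [CommRing k] {m n : ℕ} (f : Fin m → Fin n)
    (Γ : Multiset (Fin m × Fin m)) :
    ren k f (graphMonomial k m Γ) = graphMonomial k n (Γ.map (Prod.map f f)) := by
  simp [graphMonomial, map_multiset_prod, Multiset.map_map, bracket, ren]

lemma subst_ren {k : Type} [CommRing k] {m n : ℕ} (f : Fin m → Fin n)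
    (g : Matrix (Fin 2) (Fin 2) k) (p : PtRing k m) :
    subst k n g (ren k f p) = ren k f (subst k m g p) := by
  have : (subst k n g).comp (ren k f) = (ren k f).comp (subst k m g) := by
    apply MvPolynomial.algHom_ext
    rintro ⟨i, j⟩
    fin_cases j <;> simp [subst, ren]
  exact DFunLike.congr_fun this p

lemma weight_mapDomain {m n : ℕ} (f : Fin m → Fin n) (s : Fin m × Fin 2 →₀ ℕ) :
    weight (wt n) (mapDomain (Prod.map f id) s) = mapDomain f (weight (wt m) s) := by
  induction s using Finsupp.induction_linear with
  | zero => simp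
  | add a b ha hb => simp only [mapDomain_add, map_add, ha, hb]
  | single p c => simp [mapDomain_single, weight_single]

lemma ren_hom {k : Type} [CommRing k] {m n : ℕ} (f : Fin m → Fin n) {p : PtRing k m}
    {w : Fin m →₀ ℕ} (h : IsWeightedHomogeneous (wt m) p w) :
    IsWeightedHomogeneous (wt n) (ren k f p) (mapDomain f w) := by
  rw [p.as_sum, map_sum]
  refine IsWeightedHomogeneous.sum _ _ _ fun s hs => ?_
  rw [ren, rename_monomial]
  refine isWeightedHomogeneous_monomial _ _ _ ?_
  rw [weight_mapDomain, h (MvPolynomial.mem_support_iff.1 hs)]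

lemma ren_mem_Rv {k : Type} [CommRing k] {m n : ℕ} (f : Fin m → Fin n) {p : PtRing k m}
    {w : Fin m →₀ ℕ} (h : p ∈ Rv k m w) : ren k f p ∈ Rv k n (mapDomain f w) := by
  rw [mem_Rv] at *
  exact ⟨fun g => by rw [subst_ren, h.1], ren_hom f h.2⟩

/-- In a commutative ring where `x y' = x' y`, a monomial in `x, y, x', y'` depends only on its
degree in `(x, y)`, its degree in `(x', y')`, and its total degree in `(x, x')`. -/
lemma monomial_eq_of_rel {Q : Type*} [CommRing Q] {x y x' y' : Q} (h : x * y' = x' * y)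
    {a b c d a₂ b₂ c₂ d₂ : ℕ} (h1 : a + b = a₂ + b₂) (h2 : c + d = c₂ + d₂)
    (h3 : a + c = a₂ + c₂) :
    x ^ a * y ^ b * (x' ^ c * y' ^ d) = x ^ a₂ * y ^ b₂ * (x' ^ c₂ * y' ^ d₂) := by
  wlog hle : a ≤ a₂ generalizing a b c d a₂ b₂ c₂ d₂
  · exact (this h1.symm h2.symm h3.symm (by omega)).symm
  obtain ⟨t, rfl⟩ := Nat.exists_eq_add_of_le hle
  obtain rfl : b = b₂ + t := by omega
  obtain rfl : c = c₂ + t := by omega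
  obtain rfl : d₂ = d + t := by omega
  calc _ = x ^ a * y ^ b₂ * x' ^ c₂ * y' ^ d * (x' * y) ^ t := by ring
    _ = _ := by rw [← h]; ring

lemma weight_apply_point {n : ℕ} (s : Fin n × Fin 2 →₀ ℕ) (i : Fin n) :
    weight (wt n) s i = s (i, 0) + s (i, 1) := by
  induction s using Finsupp.induction_linear with
  | zero => simp
  | add a b ha hb => simp only [map_add, Finsupp.add_apply, ha, hb]; ring
  | single p c =>
    obtain ⟨j, l⟩ := p
    fin_cases l <;> by_cases hj : j = i <;> simp [weight_single, hj]

lemma monomial_eq_prod {k : Type} [CommRing k] {n : ℕ} (s : Fin n × Fin 2 →₀ ℕ) :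
    (monomial s (1 : k)) = ∏ i : Fin n, X (i, 0) ^ s (i, 0) * X (i, 1) ^ s (i, 1) := by
  rw [monomial_eq, C_1, one_mul, Finsupp.prod_fintype _ _ (by simp), Fintype.prod_prod_type]
  simp

lemma mapDomain_merge_apply {n : ℕ} (s : Fin (n + 2) × Fin 2 →₀ ℕ) (j : Fin (n + 1)) (l : Fin 2) :
    mapDomain (Prod.map (merge n) id) s (j, l) =
      s (j.castSucc, l) + if j = Fin.last n then s (Fin.last (n + 1), l) else 0 := by
  induction s using Finsupp.induction_linear with
  | zero => simp
  | add a b ha hb => simp only [mapDomain_add, Finsupp.add_apply, ha, hb]; split_ifs <;> ring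
  | single p c =>
    obtain ⟨i, l'⟩ := p
    rw [mapDomain_single]
    induction i using Fin.lastCases with
    | last =>
      have : merge n (Fin.last (n + 1)) = Fin.last n := by ext; simp [merge]
      simp [single_apply, this, eq_comm]
      grind
    | cast i =>
      have : Fin.last (n + 1) ≠ i.castSucc := (Fin.castSucc_lt_last i).ne'
      simp [single_apply, merge_castSucc, this.symm]

/-- Modulo the bracket of the last two points, a monomial of given multidegree is determined by
its restriction to the diagonal. The quotient is represented by a ring map `q` killing the
bracket. -/
lemma map_monomial_eq {k Q : Type} [CommRing k] [CommRing Q] {n : ℕ} (q : PtRing k (n + 2) →+* Q)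
    (hq : q (bracket k (n + 2) (pen n) (Fin.last (n + 1))) = 0)
    {s s₂ : Fin (n + 2) × Fin 2 →₀ ℕ}
    (hw : weight (wt (n + 2)) s = weight (wt (n + 2)) s₂)
    (hm : mapDomain (Prod.map (merge n) id) s = mapDomain (Prod.map (merge n) id) s₂) :
    q (monomial s (1 : k)) = q (monomial s₂ (1 : k)) := by
  have hrel : q (X (pen n, 0)) * q (X (Fin.last (n + 1), 1)) =
      q (X (Fin.last (n + 1), 0)) * q (X (pen n, 1)) := by
    rw [← sub_eq_zero, ← map_mul, ← map_mul, ← map_sub]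
    exact hq
  have hw' (i : Fin (n + 2)) : s (i, 0) + s (i, 1) = s₂ (i, 0) + s₂ (i, 1) := by
    rw [← weight_apply_point, ← weight_apply_point, hw]
  have hm' (j : Fin (n + 1)) (l : Fin 2) := DFunLike.congr_fun hm (j, l)
  simp only [mapDomain_merge_apply] at hm'
  rw [monomial_eq_prod, monomial_eq_prod, Fin.prod_univ_castSucc, Fin.prod_univ_castSucc,
    Fin.prod_univ_castSucc, Fin.prod_univ_castSucc]
  have h1 : ∀ i : Fin n, ∀ l, s (i.castSucc.castSucc, l) = s₂ (i.castSucc.castSucc, l) := by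
    intro i l
    simpa [(Fin.castSucc_lt_last i).ne] using hm' i.castSucc l
  have h2 := monomial_eq_of_rel hrel (hw' (pen n)) (hw' (Fin.last (n + 1)))
    (by simpa [pen] using hm' (Fin.last n) 0)
  simp only [h1]
  simp only [map_mul, map_pow]
  exact (mul_assoc _ _ _).trans ((congrArg _ h2).trans (mul_assoc _ _ _).symm)

/-- A multihomogeneous polynomial vanishing on the diagonal of the last two points is divisible
by their bracket. -/
lemma bracket_dvd {k : Type} [CommRing k] {n : ℕ} {w : Fin (n + 2) →₀ ℕ} {f : PtRing k (n + 2)}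
    (hf : IsWeightedHomogeneous (wt (n + 2)) f w) (h0 : ren k (merge n) f = 0) :
    bracket k (n + 2) (pen n) (Fin.last (n + 1)) ∣ f := by
  classical
  set I := Ideal.span {bracket k (n + 2) (pen n) (Fin.last (n + 1))} with hI
  rw [← Ideal.mem_span_singleton, ← hI, ← Ideal.Quotient.eq_zero_iff_mem]
  -- A linear map recovering the class of `f` modulo the bracket from the restriction of `f`.
  let ψ : PtRing k (n + 1) →ₗ[k] (PtRing k (n + 2) ⧸ I) :=
    (basisMonomials (Fin (n + 1) × Fin 2) k).constr k fun s' =>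
      if h : ∃ s, weight (wt (n + 2)) s = w ∧ mapDomain (Prod.map (merge n) id) s = s' then
        Ideal.Quotient.mk I (monomial h.choose 1) else 0
  have hψ : ∀ s, weight (wt (n + 2)) s = w →
      ψ (ren k (merge n) (monomial s 1)) = Ideal.Quotient.mk I (monomial s 1) := by
    intro s hs
    have hex : ∃ s₂, weight (wt (n + 2)) s₂ = w ∧ mapDomain (Prod.map (merge n) id) s₂ =
      mapDomain (Prod.map (merge n) id) s := ⟨s, hs, rfl⟩
    have h1 := Module.Basis.constr_basis (basisMonomials (Fin (n + 1) × Fin 2) k) k (fun s' =>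
      if h : ∃ s, weight (wt (n + 2)) s = w ∧ mapDomain (Prod.map (merge n) id) s = s' then
        Ideal.Quotient.mk I (monomial h.choose 1) else 0) (mapDomain (Prod.map (merge n) id) s)
    rw [dif_pos hex, coe_basisMonomials] at h1
    rw [ren, rename_monomial]
    refine h1.trans (map_monomial_eq (Ideal.Quotient.mk I)
      (Ideal.Quotient.eq_zero_iff_mem.2 (Ideal.subset_span rfl)) ?_ hex.choose_spec.2)
    rw [hs, hex.choose_spec.1]
  have key : ψ (ren k (merge n) f) = Ideal.Quotient.mk I f := by
    rw [f.as_sum, map_sum, map_sum, map_sum]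
    refine Finset.sum_congr rfl fun s hs => ?_
    have hm : monomial s (coeff s f) = coeff s f • monomial s (1 : k) := by
      rw [smul_monomial, smul_eq_mul, mul_one]
    rw [hm, map_smul, map_smul, hψ s (hf (MvPolynomial.mem_support_iff.1 hs))]
    rfl
  rw [← key, h0, map_zero]

/-- An invariant vanishing on the diagonal of the last two points is their bracket times an
invariant of smaller multidegree. -/
lemma exists_quotient {k : Type} [Field k] {n : ℕ} {w : Fin (n + 2) →₀ ℕ} {f : PtRing k (n + 2)}
    (hf : f ∈ Rv k (n + 2) w) (h0 : ren k (merge n) f = 0) (hne : f ≠ 0) :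
    ∃ (w₀ : Fin (n + 2) →₀ ℕ) (g : PtRing k (n + 2)),
      w = single (pen n) 1 + single (Fin.last (n + 1)) 1 + w₀ ∧
      g ∈ Rv k (n + 2) w₀ ∧ f = bracket k (n + 2) (pen n) (Fin.last (n + 1)) * g := by
  classical
  let _ := MvPolynomial.weightedGradedAlgebra k (wt (n + 2))
  rw [mem_Rv] at hf
  have hb := bracket_hom (k := k) (pen n) (Fin.last (n + 1))
  obtain ⟨g, hg⟩ := bracket_dvd hf.2 h0
  have hfd : (DirectSum.decompose (weightedHomogeneousSubmodule k (wt (n + 2))) f w :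
      PtRing k (n + 2)) = f :=
    DirectSum.decompose_of_mem_same _ hf.2
  by_cases hle : single (pen n) 1 + single (Fin.last (n + 1)) 1 ≤ w
  · have h1 := DirectSum.coe_decompose_mul_of_left_mem_of_le
      (weightedHomogeneousSubmodule k (wt (n + 2))) (b := g) hb hle
    rw [← hg, hfd] at h1
    refine ⟨_, _, (add_tsub_cancel_of_le hle).symm, mem_Rv.2 ⟨fun γ => ?_,
      (mem_weightedHomogeneousSubmodule k _ _ _).1 (SetLike.coe_mem _)⟩, h1⟩
    refine mul_left_cancel₀ (bracket_ne_zero (k := k) (pen_lt_last n).ne) ?_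
    conv_lhs => rw [← subst_bracket γ, ← map_mul, ← h1, hf.1]
    exact h1
  · have h1 := DirectSum.coe_decompose_mul_of_left_mem_of_not_le
      (weightedHomogeneousSubmodule k (wt (n + 2))) (b := g) hb hle
    rw [← hg, hfd] at h1
    exact absurd h1 hne

/-! ### At most one point -/

lemma graphs_eq_of_subsingleton {n : ℕ} [Subsingleton (Fin n)] {w : Fin n →₀ ℕ}
    {Γ : Multiset (Fin n × Fin n)} (h : Γ ∈ graphs n w) : Γ = 0 :=
  Multiset.eq_zero_of_forall_notMem fun e he => (h.1 e he).ne (Subsingleton.elim _ _)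

lemma mem_span_of_hom_zero {k : Type} [CommRing k] {n : ℕ} {f : PtRing k n}
    (h : IsWeightedHomogeneous (wt n) f 0) :
    f ∈ Submodule.span k (graphMonomial k n '' graphs n 0) := by
  have h1 : f = coeff 0 f • graphMonomial k n 0 := by
    ext s
    have : coeff s (graphMonomial k n 0) = if s = 0 then (1 : k) else 0 := by
      simp [graphMonomial, coeff_one, eq_comm]
    rw [coeff_smul, this]
    split_ifs with hs
    · simp [hs]
    · rw [smul_zero]
      by_contra hne
      refine hs ?_
      ext ⟨i, l⟩
      have := DFunLike.congr_fun (h hne) i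
      rw [weight_apply_point] at this
      fin_cases l <;> simp at this ⊢ <;> omega
  rw [h1]
  exact Submodule.smul_mem _ _ (Submodule.subset_span ⟨0, ⟨by simp, by simp, by simp⟩, rfl⟩)

lemma eval_scale {k : Type} [CommRing k] {f : PtRing k 1} {w : Fin 1 →₀ ℕ}
    (h : IsWeightedHomogeneous (wt 1) f w) (c : k) (p : Fin 1 × Fin 2 → k) :
    MvPolynomial.eval (fun i => c * p i) f = c ^ w 0 * MvPolynomial.eval p f := by
  rw [eval_eq', eval_eq', Finset.mul_sum]
  refine Finset.sum_congr rfl fun s hs => ?_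
  have h1 := DFunLike.congr_fun (h (MvPolynomial.mem_support_iff.1 hs)) 0
  rw [weight_apply_point] at h1
  simp only [Fintype.prod_prod_type, Fin.prod_univ_two, Finset.univ_unique, Fin.default_eq_zero,
    Finset.prod_singleton]
  rw [← h1]; ring

/-- A single point has no invariants of positive degree: `SL₂` is transitive on nonzero vectors,
so an invariant is constant there, and comparing values at `(1, 0)` and `(2, 0)` it vanishes. -/
lemma one_point {k : Type} [Field k] [CharZero k] {f : PtRing k 1} {w : Fin 1 →₀ ℕ}
    (h : f ∈ Rv k 1 w) (hw : w ≠ 0) : f = 0 := by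
  rw [mem_Rv] at h
  have hw0 : w 0 ≠ 0 := fun h0 => hw (Finsupp.ext fun i => by rw [Subsingleton.elim i 0, h0]; rfl)
  have heval : ∀ (g : Matrix.SpecialLinearGroup (Fin 2) k),
      MvPolynomial.eval (fun i : Fin 1 × Fin 2 => g.1 0 i.2) f =
        MvPolynomial.eval (fun i : Fin 1 × Fin 2 => if i.2 = 0 then 1 else 0) f := by
    intro g
    conv_rhs => rw [← h.1 g]
    have : (MvPolynomial.aeval (R := k) (fun i : Fin 1 × Fin 2 => g.1 0 i.2)) =
        (MvPolynomial.aeval (R := k) (fun i : Fin 1 × Fin 2 => if i.2 = 0 then (1 : k) else 0)).comp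
          (subst k 1 g.1) := by
      apply MvPolynomial.algHom_ext
      rintro ⟨i, j⟩
      fin_cases j <;> simp [subst]
    have h2 := DFunLike.congr_fun this f
    rw [AlgHom.comp_apply] at h2
    simpa only [aeval_eq_eval, coe_aeval_eq_eval] using h2
  have hconst : ∀ p : Fin 1 × Fin 2 → k, p ≠ 0 → MvPolynomial.eval p f =
      MvPolynomial.eval (fun i : Fin 1 × Fin 2 => if i.2 = 0 then 1 else 0) f := by
    intro p hp
    have hex : ∃ g : Matrix.SpecialLinearGroup (Fin 2) k, p = fun i => g.1 0 i.2 := by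
      by_cases hx : p (0, 0) = 0
      · have hy : p (0, 1) ≠ 0 := by
          intro hy
          refine hp (funext ?_)
          rintro ⟨i, j⟩
          rw [Subsingleton.elim i 0]
          fin_cases j <;> simp [hx, hy]
        refine ⟨⟨!![0, p (0, 1); -(p (0, 1))⁻¹, 0], by simp [Matrix.det_fin_two, hy]⟩, ?_⟩
        funext ⟨i, j⟩
        rw [Subsingleton.elim i 0]
        fin_cases j <;> simp [hx]
      · refine ⟨⟨!![p (0, 0), p (0, 1); 0, (p (0, 0))⁻¹], by simp [Matrix.det_fin_two, hx]⟩, ?_⟩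
        funext ⟨i, j⟩
        rw [Subsingleton.elim i 0]
        fin_cases j <;> simp
    obtain ⟨g, rfl⟩ := hex
    exact heval g
  have hone : MvPolynomial.eval (fun i : Fin 1 × Fin 2 => if i.2 = 0 then (1 : k) else 0) f = 0 := by
    have h2 := eval_scale h.2 2 (fun i : Fin 1 × Fin 2 => if i.2 = 0 then (1 : k) else 0)
    rw [hconst _ (fun h => by simpa using congrFun h (0, 0))] at h2
    have h3 : (2 : k) ^ w 0 ≠ 1 := by
      exact_mod_cast (Nat.one_lt_two_pow hw0).ne'
    by_contra hne
    exact h3 (mul_right_cancel₀ hne (by rw [one_mul, ← h2]))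
  refine MvPolynomial.funext fun p => ?_
  rw [map_zero]
  by_cases hp : p = 0
  · have := eval_scale h.2 0 p
    simpa [hp, hw0, Pi.zero_def] using this
  · rw [hconst p hp, hone]

lemma base_case {k : Type} [Field k] [CharZero k] {n : ℕ} (hn : n ≤ 1) (w : Fin n →₀ ℕ) :
    LinearIndepOn k (graphMonomial k n) (graphs n w) ∧
      Rv k n w ≤ Submodule.span k (graphMonomial k n '' graphs n w) := by
  have : Subsingleton (Fin n) := Fin.subsingleton_iff_le_one.2 hn
  constructor
  · refine (LinearIndepOn.singleton (i := 0) ?_).mono fun Γ h => graphs_eq_of_subsingleton h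
    simp [graphMonomial]
  · intro f hf
    by_cases hw : w = 0
    · subst hw
      exact mem_span_of_hom_zero (mem_Rv.1 hf).2
    · obtain rfl | rfl : n = 0 ∨ n = 1 := by omega
      · exact absurd (Subsingleton.elim w 0) hw
      · rw [one_point hf hw]
        exact zero_mem _

/-! ### The induction -/

lemma span_step {k : Type} [Field k] (n t : ℕ)
    (ih : ∀ w : Fin (n + 1) →₀ ℕ,
      Rv k (n + 1) w ≤ Submodule.span k (graphMonomial k (n + 1) '' graphs (n + 1) w))
    (w : Fin (n + 2) →₀ ℕ) (ht : w (Fin.last (n + 1)) = t) :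
    Rv k (n + 2) w ≤ Submodule.span k (graphMonomial k (n + 2) '' graphs (n + 2) w) := by
  induction t using Nat.strong_induction_on generalizing w with
  | _ t iht =>
  intro f hf
  -- lift the restriction of `f` to a combination of noncrossing graph monomials
  have hlift : Submodule.span k (graphMonomial k (n + 1) ''
        graphs (n + 1) (mapDomain (merge n) w)) ≤
      (Submodule.span k (graphMonomial k (n + 2) '' graphs (n + 2) w)).map
        (ren k (merge n)).toLinearMap := by
    rw [Submodule.span_le]
    rintro _ ⟨Γ', hΓ', rfl⟩
    obtain ⟨Γ, hΓ, rfl⟩ := exists_lift n _ w rfl Γ' hΓ'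
    exact ⟨_, Submodule.subset_span ⟨Γ, hΓ, rfl⟩, ren_graphMonomial _ _⟩
  obtain ⟨f₁, hf₁, h1⟩ := hlift (ih _ (ren_mem_Rv (merge n) hf))
  have hf₁R : f₁ ∈ Rv k (n + 2) w := by
    refine Submodule.span_le.2 ?_ hf₁
    rintro _ ⟨Γ, hΓ, rfl⟩
    exact graphMonomial_mem_Rv hΓ
  suffices h : f - f₁ ∈ Submodule.span k (graphMonomial k (n + 2) '' graphs (n + 2) w) by
    simpa using add_mem h hf₁
  by_cases hne : f - f₁ = 0
  · rw [hne]; exact zero_mem _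
  obtain ⟨w₀, g, rfl, hg, hfg⟩ := exists_quotient (sub_mem hf hf₁R)
    (by rw [map_sub, sub_eq_zero]; exact h1.symm) hne
  have hg' := iht (w₀ (Fin.last (n + 1))) (by rw [← ht]; simp [(pen_lt_last n).ne]) w₀ rfl hg
  have hmul : Submodule.span k (graphMonomial k (n + 2) '' graphs (n + 2) w₀) ≤
      (Submodule.span k (graphMonomial k (n + 2) '' graphs (n + 2)
        (single (pen n) 1 + single (Fin.last (n + 1)) 1 + w₀))).comap
        (LinearMap.mulLeft k (bracket k (n + 2) (pen n) (Fin.last (n + 1)))) := by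
    rw [Submodule.span_le]
    rintro _ ⟨Γ, hΓ, rfl⟩
    exact Submodule.subset_span ⟨_, cons_mem_graphs.2 hΓ, graphMonomial_cons _ _⟩
  rw [hfg]
  exact hmul hg'

lemma linearIndep_step {k : Type} [Field k] (n t : ℕ)
    (ih : ∀ w : Fin (n + 1) →₀ ℕ, LinearIndepOn k (graphMonomial k (n + 1)) (graphs (n + 1) w))
    (w : Fin (n + 2) →₀ ℕ) (ht : w (Fin.last (n + 1)) = t) :
    LinearIndepOn k (graphMonomial k (n + 2)) (graphs (n + 2) w) := by
  induction t using Nat.strong_induction_on generalizing w with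
  | _ t iht =>
  set A := {Γ ∈ graphs (n + 2) w | (pen n, Fin.last (n + 1)) ∈ Γ} with hA
  set B := {Γ ∈ graphs (n + 2) w | (pen n, Fin.last (n + 1)) ∉ Γ} with hB
  have hAB : graphs (n + 2) w = A ∪ B := by
    ext Γ; simp only [hA, hB, Set.mem_union, Set.mem_sep_iff]; tauto
  have hAi : LinearIndepOn k (graphMonomial k (n + 2)) A := by
    by_cases hle : single (pen n) 1 + single (Fin.last (n + 1)) 1 ≤ w
    · obtain ⟨w₀, rfl⟩ := exists_add_of_le hle
      have h1 := iht (w₀ (Fin.last (n + 1))) (by rw [← ht]; simp [(pen_lt_last n).ne]) w₀ rfl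
      have h2 : LinearIndepOn k (graphMonomial k (n + 2) ∘
          (Multiset.cons (pen n, Fin.last (n + 1)))) (graphs (n + 2) w₀) := by
        have h3 := LinearIndependent.map' h1
          (LinearMap.mulLeft k (bracket k (n + 2) (pen n) (Fin.last (n + 1))))
          (LinearMap.ker_eq_bot.2 fun a b hab =>
            mul_left_cancel₀ (bracket_ne_zero (k := k) (pen_lt_last n).ne) hab)
        have h4 : (fun Γ : graphs (n + 2) w₀ => (graphMonomial k (n + 2) ∘
            Multiset.cons (pen n, Fin.last (n + 1))) Γ) =
            LinearMap.mulLeft k (bracket k (n + 2) (pen n) (Fin.last (n + 1))) ∘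
              fun Γ : graphs (n + 2) w₀ => graphMonomial k (n + 2) Γ :=
          _root_.funext fun Γ => graphMonomial_cons _ _
        rw [LinearIndepOn, h4]
        exact h3
      refine h2.image_of_comp.mono ?_
      rintro Γ ⟨hΓ, he⟩
      obtain ⟨Γ₀, rfl⟩ := Multiset.exists_cons_of_mem he
      exact ⟨Γ₀, cons_mem_graphs.1 hΓ, rfl⟩
    · have : A = ∅ := by
        refine Set.eq_empty_of_forall_notMem ?_
        rintro Γ ⟨hΓ, he⟩
        obtain ⟨Γ₀, rfl⟩ := Multiset.exists_cons_of_mem he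
        refine hle ?_
        rw [← hΓ.2.2, val_cons]
        exact le_self_add
      rw [this]
      exact linearIndepOn_empty _ _
  have hBi : LinearIndepOn k ((ren k (merge n)).toLinearMap ∘ graphMonomial k (n + 2)) B := by
    have h1 : (ren k (merge n)).toLinearMap ∘ graphMonomial k (n + 2) =
        graphMonomial k (n + 1) ∘ Multiset.map (Prod.map (merge n) (merge n)) := by
      funext Γ
      exact ren_graphMonomial _ _
    rw [h1]
    refine ((ih (mapDomain (merge n) w)).mono ?_).comp_of_image ?_
    · rintro _ ⟨Γ, ⟨hΓ, he⟩, rfl⟩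
      exact merge_mem_graphs hΓ he
    · rintro Γ ⟨hΓ, hΓe⟩ Δ ⟨hΔ, hΔe⟩ h
      exact merge_injOn n _ w rfl hΓ hΓe hΔ hΔe h
  rw [hAB]
  refine hAi.union hBi.of_comp ?_
  have hdisj := Submodule.range_ker_disjoint hBi
  rw [← Set.image_eq_range] at hdisj
  refine hdisj.symm.mono_left ?_
  -- an edge joining the last two points becomes a loop, whose bracket is zero
  rw [Submodule.span_le]
  rintro _ ⟨Γ, ⟨hΓ, he⟩, rfl⟩
  obtain ⟨Γ₀, rfl⟩ := Multiset.exists_cons_of_mem he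
  refine LinearMap.mem_ker.2 ?_
  refine (ren_graphMonomial _ _).trans ?_
  rw [Multiset.map_cons, graphMonomial_cons]
  simp [merge_pen, bracket]

lemma main_aux {k : Type} [Field k] [CharZero k] (n : ℕ) :
    (∀ w : Fin n →₀ ℕ, LinearIndepOn k (graphMonomial k n) (graphs n w)) ∧
      ∀ w : Fin n →₀ ℕ, Rv k n w ≤ Submodule.span k (graphMonomial k n '' graphs n w) := by
  induction n with
  | zero => exact ⟨fun w => (base_case (by simp) w).1, fun w => (base_case (by simp) w).2⟩
  | succ n ih =>
    cases n with
    | zero => exact ⟨fun w => (base_case (by simp) w).1, fun w => (base_case (by simp) w).2⟩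
    | succ n =>
      exact ⟨fun w => linearIndep_step n _ ih.1 w rfl, fun w => span_step n _ ih.2 w rfl⟩

/-- The graphs of the statement are exactly those of `graphs`. -/
lemma mem_graphs_iff {n : ℕ} {v : Fin n → ℕ} {Γ : Multiset (Fin n × Fin n)} :
    ((∀ e ∈ Γ, e.1 ≠ e.2) ∧ Noncrossing n Γ ∧ Upward n Γ ∧ valence n Γ = v) ↔
      Γ ∈ graphs n (equivFunOnFinite.symm v) := by
  have hval : valence n Γ = v ↔ val Γ = equivFunOnFinite.symm v := by
    rw [DFunLike.ext_iff (F := Fin n →₀ ℕ), _root_.funext_iff]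
    exact forall_congr' fun i => by rw [val_eq_valence]; rfl
  constructor
  · rintro ⟨-, hc, hu, hv⟩
    exact ⟨hu, fun e he f hf h => hc e he f hf ⟨_, _, _, _, rfl, rfl, h⟩, hval.1 hv⟩
  · rintro ⟨hu, hc, hv⟩
    refine ⟨fun e he => (hu e he).ne, ?_, hu, hval.2 hv⟩
    rintro e he f hf ⟨a, b, c, d, h1, h2, hac, hcb, hbd⟩
    have hue := hu e he
    have huf := hu f hf
    -- as `a < b` and `c < d`, the unordered pairs determine the ordered ones
    have key : ∀ {p q r s : Fin n}, p < q → r < s → ({p, q} : Set (Fin n)) = {r, s} →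
        p = r ∧ q = s := by
      intro p q r s hpq hrs h
      rcases Set.pair_eq_pair_iff.1 h with h | ⟨rfl, rfl⟩
      · exact h
      · exact absurd hpq hrs.not_gt
    obtain ⟨rfl, rfl⟩ := key hue (hac.trans hcb) h1
    obtain ⟨rfl, rfl⟩ := key huf (hcb.trans hbd) h2
    exact hc e he f hf ⟨hac, hcb, hbd⟩

end Algebra

/-- In characteristic zero, the graph monomials of noncrossing upward-oriented graphs of
valence vector `v` form a basis of `R_v`. -/
theorem stmt6 (k : Type) [Field k] [CharZero k] (n : ℕ) (v : Fin n → ℕ) :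
    LinearIndependent k
      (fun Γ : {Γ : Multiset (Fin n × Fin n) //
          (∀ e ∈ Γ, e.1 ≠ e.2) ∧ Noncrossing n Γ ∧ Upward n Γ ∧ valence n Γ = v} =>
        graphMonomial k n Γ.1) ∧
    Submodule.span k
      (Set.range (fun Γ : {Γ : Multiset (Fin n × Fin n) //
          (∀ e ∈ Γ, e.1 ≠ e.2) ∧ Noncrossing n Γ ∧ Upward n Γ ∧ valence n Γ = v} =>
        graphMonomial k n Γ.1)) = Rv k n v := by
  have hset : {Γ : Multiset (Fin n × Fin n) |
      (∀ e ∈ Γ, e.1 ≠ e.2) ∧ Noncrossing n Γ ∧ Upward n Γ ∧ valence n Γ = v} =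
      graphs n (Finsupp.equivFunOnFinite.symm v) := Set.ext fun Γ => mem_graphs_iff
  have hR : Rv k n v = Rv k n (Finsupp.equivFunOnFinite.symm v : Fin n →₀ ℕ) := rfl
  obtain ⟨h1, h2⟩ := main_aux (k := k) n
  constructor
  · have h := h1 (Finsupp.equivFunOnFinite.symm v)
    rw [← hset] at h
    exact h
  · rw [hR]
    refine le_antisymm ?_ ((h2 _).trans (Submodule.span_mono ?_))
    · rw [Submodule.span_le]
      rintro _ ⟨Γ, rfl⟩
      exact graphMonomial_mem_Rv (mem_graphs_iff.1 Γ.2)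
    · rintro _ ⟨Γ, hΓ, rfl⟩
      exact ⟨⟨Γ, mem_graphs_iff.2 hΓ⟩, rfl⟩
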